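/- Let K be a totally real number field such that no element of K squares to 2 and such that every totally positive unit of O_K is the square of a unit. Suppose 2 = γ·t² with γ, t ∈ O_K both totally positive. If there exists a universal ternary classical quadratic lattice over K, then t = ω² or γ·t = ω² for some ω ∈ O_K. -/

import Mathlib

/-!
The proof rests on the near-indecomposability of totally positive divisors of `2`: if
`(β + δ) ε = 2` with `β, δ, ε` totally positive integers, then
`ε² β δ ≤ ε² (β + δ)² / 4 = 1` in every real embedding, so `ε² β δ = 1` by Kronecker's theorem,
whence `β = δ` and `ε β = 1` (`eq_of_add_mul_eq_two`).

If `t` is a unit, it is a square by hypothesis. Otherwise `t`, `γ` and `γ t` are indecomposable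
and the only decomposition of `2` is `1 + 1`. Choose lattice vectors `v, w₁, w₂, w₃` of norm
`1, t, γ, γ t`. For two lattice vectors with inner product `b`, Cauchy–Schwarz says that
`Q u * Q w - b²` is zero or totally positive (`cauchy_schwarz`). If `Q u * Q w` is one of `t`, `γ`,
`γ t`, then it is a square or `b = 0`; `γ` is no square because `2` is not one. Hence, unless the
conclusion holds,
`v` is orthogonal to all `wᵢ` and `w₁ ⟂ w₂`. The four vectors are linearly dependent, so with
`c = B(w₁, w₃)` and `d = B(w₂, w₃)` one gets `γ² t² = γ c² + t d²`. Cauchy–Schwarz for `w₁, w₃`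
(norms with product `γ t² = 2`) leaves `c = 0`, giving `t = (d / γ)²`, or `c² = 1`, giving
`γ t = (t d)²`.
-/

open NumberField

/-- An element of a number field is totally positive if it is positive in every
real embedding. -/
def TotallyPositive (K : Type*) [Field K] (α : K) : Prop :=
  ∀ σ : K →+* ℝ, 0 < σ α

/-- `(Q, L)` is a universal ternary classical quadratic lattice over `K`:
`Q` is a totally positive definite quadratic form on `K³`, `L` is a finitely generated
`𝓞 K`-submodule spanning `K³` over `K`, the associated bilinear form is `𝓞 K`-valued
on `L`, and every totally positive integer is represented by `Q` on `L`. -/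
def IsUniversalTernaryClassicalLattice (K : Type*) [Field K] [NumberField K]
    (Q : QuadraticForm K (Fin 3 → K)) (L : Submodule (𝓞 K) (Fin 3 → K)) : Prop :=
  (∀ v : Fin 3 → K, v ≠ 0 → TotallyPositive K (Q v)) ∧
  L.FG ∧
  Submodule.span K (L : Set (Fin 3 → K)) = ⊤ ∧
  (∀ u ∈ L, ∀ w ∈ L, ∃ a : 𝓞 K, (a : K) = (Q (u + w) - Q u - Q w) / 2) ∧
  (∀ α : 𝓞 K, TotallyPositive K (α : K) → ∃ v ∈ L, Q v = (α : K))

lemma coe_add_int {K : Type*} [Field K] (a b : 𝓞 K) :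
    ((a + b : 𝓞 K) : K) = (a : K) + (b : K) :=
  map_add (algebraMap (𝓞 K) K) a b

lemma coe_mul_int {K : Type*} [Field K] (a b : 𝓞 K) :
    ((a * b : 𝓞 K) : K) = (a : K) * (b : K) :=
  map_mul (algebraMap (𝓞 K) K) a b

lemma coe_sq_int {K : Type*} [Field K] (a : 𝓞 K) : ((a ^ 2 : 𝓞 K) : K) = (a : K) ^ 2 :=
  map_pow (algebraMap (𝓞 K) K) a 2

lemma coe_two_int {K : Type*} [Field K] : ((2 : 𝓞 K) : K) = 2 :=
  map_ofNat (algebraMap (𝓞 K) K) 2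

/-- Kronecker's theorem for a totally positive integer with all conjugates at most `1`. -/
lemma eq_one_of_conjugates_le_one {K : Type*} [Field K] [NumberField K]
    (hTR : ∀ φ : K →+* ℂ, ∀ x : K, (φ x).im = 0) (a : 𝓞 K)
    (ha : TotallyPositive K (a : K)) (hle : ∀ σ : K →+* ℝ, σ (a : K) ≤ 1) : a = 1 := by
  have hreal (φ : K →+* ℂ) : ∃ σ : K →+* ℝ, ∀ x, φ x = (σ x : ℂ) := by
    have h : ComplexEmbedding.IsReal φ := by
      rw [ComplexEmbedding.isReal_iff]
      ext x
      simp only [ComplexEmbedding.conjugate_coe_eq]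
      exact Complex.conj_eq_iff_im.2 (hTR φ x)
    exact ⟨h.embedding, fun x => (h.coe_embedding_apply x).symm⟩
  obtain ⟨φ⟩ : Nonempty (K →+* ℂ) := inferInstance
  obtain ⟨σ, -⟩ := hreal φ
  have ha0 : (a : K) ≠ 0 := by
    intro h
    have := ha σ
    simp [h] at this
  obtain ⟨n, hn, hpow⟩ := Embeddings.pow_eq_one_of_norm_le_one K ℂ ha0 a.isIntegral_coe (by
    intro φ
    obtain ⟨σ, hσ⟩ := hreal φ
    rw [hσ, Complex.norm_real, Real.norm_of_nonneg (ha σ).le]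
    exact hle σ)
  have h1 : σ (a : K) ^ n = 1 := by rw [← map_pow, hpow, map_one]
  have h2 : σ (a : K) = 1 := (pow_eq_one_iff_of_nonneg (ha σ).le hn.ne').1 h1
  have h3 : (a : K) = 1 := σ.injective (by rw [h2, map_one])
  exact RingOfIntegers.ext (by simpa using h3)

/-- A totally positive divisor `β + δ` of `2` that decomposes is associated to `2`, and its two
summands agree. -/
lemma eq_of_add_mul_eq_two {K : Type*} [Field K] [NumberField K]
    (hTR : ∀ φ : K →+* ℂ, ∀ x : K, (φ x).im = 0) (β δ ε : 𝓞 K)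
    (hβ : TotallyPositive K (β : K)) (hδ : TotallyPositive K (δ : K))
    (hε : TotallyPositive K (ε : K)) (h : (β + δ) * ε = 2) : β = δ ∧ ε * β = 1 := by
  have hK : ((β : K) + δ) * ε = 2 := by
    rw [← coe_add_int, ← coe_mul_int, h, coe_two_int]
  have h1 : ε ^ 2 * (β * δ) = 1 := by
    apply eq_one_of_conjugates_le_one hTR
    · intro σ
      have := hβ σ
      have := hδ σ
      have := hε σ
      simp only [map_mul, map_pow]
      positivity
    · intro σ
      have hs := congrArg σ hK
      simp only [map_mul, map_add, map_ofNat] at hs ⊢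
      simp only [map_pow]
      nlinarith [sq_nonneg (σ ε * (σ β - σ δ)), congrArg (· ^ 2) hs]
  have h4 : (ε * (β - δ)) ^ 2 = 0 := by
    linear_combination ((β + δ) * ε + 2) * h - 4 * h1
  have hε0 : ε ≠ 0 := by
    rintro rfl
    simp at h1
  have hbd : β = δ := by
    simpa [hε0, sub_eq_zero] using h4
  refine ⟨hbd, ?_⟩
  subst hbd
  have h5 : (2 : 𝓞 K) * (ε * β) = 2 * 1 := by linear_combination h
  exact mul_left_cancel₀ two_ne_zero h5

/-- Cauchy–Schwarz for two lattice vectors, with the inner product `b` an integer of `K`. -/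
lemma cauchy_schwarz {K : Type*} [Field K] [NumberField K]
    {Q : QuadraticForm K (Fin 3 → K)} {L : Submodule (𝓞 K) (Fin 3 → K)}
    (hL : IsUniversalTernaryClassicalLattice K Q L) {u w : Fin 3 → K} (hu : u ∈ L) (hw : w ∈ L)
    (hu0 : Q u ≠ 0) :
    ∃ b : 𝓞 K, QuadraticMap.polar Q u w = 2 * (b : K) ∧
      (Q u * Q w = (b : K) ^ 2 ∨ TotallyPositive K (Q u * Q w - (b : K) ^ 2)) := by
  obtain ⟨hpos, -, -, hB, -⟩ := hL
  obtain ⟨b, hb⟩ := hB u hu w hw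
  have hp : QuadraticMap.polar Q u w = 2 * (b : K) := by
    rw [hb, QuadraticMap.polar]
    ring
  refine ⟨b, hp, ?_⟩
  -- the component of `w` orthogonal to `u`, scaled by `Q u`
  have key : Q ((-(b : K)) • u + Q u • w) = Q u * (Q u * Q w - (b : K) ^ 2) := by
    rw [QuadraticMap.map_add Q, QuadraticMap.polar_smul_left, QuadraticMap.polar_smul_right, hp,
      QuadraticMap.map_smul, QuadraticMap.map_smul]
    simp only [smul_eq_mul]
    ring
  by_cases h0 : (-(b : K)) • u + Q u • w = 0
  · left
    rw [h0, QuadraticMap.map_zero] at key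
    exact sub_eq_zero.1 ((mul_eq_zero.1 key.symm).resolve_left hu0)
  · right
    intro σ
    have h1 := hpos _ h0 σ
    have hu1 : u ≠ 0 := by
      rintro rfl
      simp at hu0
    have h2 := hpos u hu1 σ
    rw [key, map_mul] at h1
    exact (pos_iff_pos_of_mul_pos h1).1 h2

lemma totallyPositive_sq {K : Type*} [Field K] {x : K} (hx : x ≠ 0) :
    TotallyPositive K (x ^ 2) := by
  intro σ
  have : σ x ≠ 0 := (map_ne_zero σ).2 hx
  rw [map_pow]
  positivity

/-- If the norms of two lattice vectors multiply to `α ∣ 2`, then `α` is a square, or the vectors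
are orthogonal, or the cofactor `ε` is a unit and their inner product `b` satisfies
`ε * b ^ 2 = 1`. -/
lemma square_or_orthogonal {K : Type*} [Field K] [NumberField K]
    (hTR : ∀ φ : K →+* ℂ, ∀ x : K, (φ x).im = 0)
    {Q : QuadraticForm K (Fin 3 → K)} {L : Submodule (𝓞 K) (Fin 3 → K)}
    (hL : IsUniversalTernaryClassicalLattice K Q L) {u w : Fin 3 → K} (hu : u ∈ L) (hw : w ∈ L)
    (hu0 : Q u ≠ 0) {α ε : 𝓞 K} (hα : Q u * Q w = (α : K)) (hε : TotallyPositive K (ε : K))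
    (h : α * ε = 2) :
    ∃ b : 𝓞 K, QuadraticMap.polar Q u w = 2 * (b : K) ∧
      (α = b ^ 2 ∨ b = 0 ∨ ε * b ^ 2 = 1) := by
  obtain ⟨b, hb, hcs⟩ := cauchy_schwarz hL hu hw hu0
  refine ⟨b, hb, ?_⟩
  rw [hα] at hcs
  rcases hcs with hsq | hpos
  · left
    exact RingOfIntegers.ext (by simpa using hsq)
  · right
    by_cases hb0 : b = 0
    · exact Or.inl hb0
    · right
      refine (eq_of_add_mul_eq_two hTR (b ^ 2) (α - b ^ 2) ε ?_ ?_ hε ?_).2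
      · rw [coe_sq_int]
        exact totallyPositive_sq (by simpa using hb0)
      · simpa using hpos
      · rw [add_sub_cancel, h]

/-- In a totally real field `K` with `√2 ∉ K` where all totally positive units are
squares of units, if `2 = γ·t²` with `γ, t` totally positive and `K` admits a universal
ternary classical lattice, then `t` or `γ·t` is a square in `𝓞 K`. -/
theorem square_of_two_eq_gamma_t_sq
    (K : Type*) [Field K] [NumberField K]
    (hTR : ∀ φ : K →+* ℂ, ∀ x : K, (φ x).im = 0)
    (hno2 : ¬ ∃ x : K, x ^ 2 = 2)
    (hU : ∀ u : (𝓞 K)ˣ, TotallyPositive K ((u : 𝓞 K) : K) → ∃ v : (𝓞 K)ˣ, u = v ^ 2)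
    (γ t : 𝓞 K) (hγ : TotallyPositive K (γ : K)) (ht : TotallyPositive K (t : K))
    (h2 : (2 : 𝓞 K) = γ * t ^ 2)
    (hex : ∃ (Q : QuadraticForm K (Fin 3 → K)) (L : Submodule (𝓞 K) (Fin 3 → K)),
      IsUniversalTernaryClassicalLattice K Q L) :
    ∃ ω : 𝓞 K, t = ω ^ 2 ∨ γ * t = ω ^ 2 := by
  obtain ⟨Q, L, hL⟩ := hex
  by_cases htu : IsUnit t
  · obtain ⟨u, rfl⟩ := htu
    obtain ⟨v, rfl⟩ := hU u ht
    exact ⟨(v : 𝓞 K), Or.inl (by push_cast; rfl)⟩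
  by_contra! hno
  have h2K : (2 : K) = (γ : K) * (t : K) ^ 2 := by
    rw [← coe_sq_int, ← coe_mul_int, ← h2, coe_two_int]
  have hγ0 : (γ : K) ≠ 0 := fun h => two_ne_zero (α := K) (by rw [h2K, h, zero_mul])
  have ht0 : (t : K) ≠ 0 := fun h => two_ne_zero (α := K) (by rw [h2K, h]; ring)
  have hγt : TotallyPositive K ((γ * t : 𝓞 K) : K) := by
    intro σ
    rw [coe_mul_int, map_mul]
    exact mul_pos (hγ σ) (ht σ)
  have htt : TotallyPositive K ((t ^ 2 : 𝓞 K) : K) := by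
    rw [coe_sq_int]
    exact totallyPositive_sq ht0
  have hone : TotallyPositive K ((1 : 𝓞 K) : K) := by
    intro σ
    simp
  obtain ⟨v, hv, hQv⟩ := hL.2.2.2.2 1 hone
  obtain ⟨w₁, hw₁, hQ₁⟩ := hL.2.2.2.2 t ht
  obtain ⟨w₂, hw₂, hQ₂⟩ := hL.2.2.2.2 γ hγ
  obtain ⟨w₃, hw₃, hQ₃⟩ := hL.2.2.2.2 (γ * t) hγt
  simp only [map_one] at hQv
  rw [coe_mul_int] at hQ₃
  have hv0 : Q v ≠ 0 := by simp [hQv]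
  have hw₁0 : Q w₁ ≠ 0 := by rwa [hQ₁]
  have hw₂0 : Q w₂ ≠ 0 := by rwa [hQ₂]
  have hv1 : QuadraticMap.polar Q v w₁ = 0 := by
    obtain ⟨b, hb, h | h | h⟩ := square_or_orthogonal hTR hL hv hw₁ hv0
      (α := t) (ε := γ * t) (by rw [hQv, hQ₁, one_mul]) hγt (by rw [h2]; ring)
    · exact absurd h (hno b).1
    · simp [hb, h]
    · exact absurd (IsUnit.of_mul_eq_one (γ * b ^ 2) (by linear_combination h)) htu
  have hv2 : QuadraticMap.polar Q v w₂ = 0 := by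
    obtain ⟨b, hb, h | h | h⟩ := square_or_orthogonal hTR hL hv hw₂ hv0
      (α := γ) (ε := t ^ 2) (by rw [hQv, hQ₂, one_mul]) htt h2.symm
    · exact absurd ⟨(b : K) * t, by rw [h2K, h, coe_sq_int]; ring⟩ hno2
    · simp [hb, h]
    · exact absurd (IsUnit.of_mul_eq_one (t * b ^ 2) (by linear_combination h)) htu
  have hv3 : QuadraticMap.polar Q v w₃ = 0 := by
    obtain ⟨b, hb, h | h | h⟩ := square_or_orthogonal hTR hL hv hw₃ hv0
      (α := γ * t) (ε := t) (by rw [hQv, hQ₃, one_mul, coe_mul_int]) ht (by rw [h2]; ring)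
    · exact absurd h (hno b).2
    · simp [hb, h]
    · exact absurd (IsUnit.of_mul_eq_one (b ^ 2) h) htu
  have h12 : QuadraticMap.polar Q w₁ w₂ = 0 := by
    obtain ⟨b, hb, h | h | h⟩ := square_or_orthogonal hTR hL hw₁ hw₂ hw₁0
      (α := γ * t) (ε := t) (by rw [hQ₁, hQ₂, coe_mul_int, mul_comm]) ht (by rw [h2]; ring)
    · exact absurd h (hno b).2
    · simp [hb, h]
    · exact absurd (IsUnit.of_mul_eq_one (b ^ 2) h) htu
  obtain ⟨c, h13, hc⟩ := square_or_orthogonal hTR hL hw₁ hw₃ hw₁0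
      (α := 2) (ε := 1) (by rw [hQ₁, hQ₃, coe_two_int, h2K]; ring) hone (by ring)
  obtain ⟨d, h23, -⟩ := cauchy_schwarz hL hw₂ hw₃ hw₂0
  -- four vectors in `K³` are dependent; pairing a relation with each of them solves for `γ² t²`
  have hrel : γ ^ 2 * t ^ 2 = γ * c ^ 2 + t * d ^ 2 := by
    have hdep : ¬ LinearIndependent K ![v, w₁, w₂, w₃] := by
      intro h
      have := h.fintype_card_le_finrank
      simp at this
    obtain ⟨g, hg, i, hi⟩ := Fintype.not_linearIndependent_iff.1 hdep
    simp only [Fin.sum_univ_four, Matrix.cons_val] at hg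
    have hpair (x : Fin 3 → K) :
        g 0 * QuadraticMap.polar Q v x + g 1 * QuadraticMap.polar Q w₁ x +
          g 2 * QuadraticMap.polar Q w₂ x + g 3 * QuadraticMap.polar Q w₃ x = 0 := by
      have := congrArg (fun s => QuadraticMap.polar Q s x) hg
      simpa only [QuadraticMap.polar_add_left, QuadraticMap.polar_smul_left,
        QuadraticMap.polar_zero_left, smul_eq_mul] using this
    have e0 := hpair v
    have e1 := hpair w₁
    have e2 := hpair w₂
    have e3 := hpair w₃
    rw [QuadraticMap.polar_comm Q w₁ v, QuadraticMap.polar_comm Q w₂ v,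
      QuadraticMap.polar_comm Q w₃ v, hv1, hv2, hv3, QuadraticMap.polar_self, hQv] at e0
    rw [QuadraticMap.polar_comm Q w₂ w₁, QuadraticMap.polar_comm Q w₃ w₁,
      hv1, h12, h13, QuadraticMap.polar_self, hQ₁] at e1
    rw [QuadraticMap.polar_comm Q w₃ w₂, hv2, h12, h23, QuadraticMap.polar_self, hQ₂] at e2
    rw [hv3, h13, h23, QuadraticMap.polar_self, hQ₃] at e3
    simp only [nsmul_eq_mul, Nat.cast_ofNat] at e0 e1 e2 e3
    have g0 : g 0 = 0 := by linear_combination e0 / 2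
    have f1 : g 1 * t = - (g 3 * c) := by linear_combination e1 / 2
    have f2 : g 2 * γ = - (g 3 * d) := by linear_combination e2 / 2
    have g3 : g 3 ≠ 0 := by
      intro g3
      rw [g3, zero_mul, neg_zero] at f1 f2
      have g1 : g 1 = 0 := (mul_eq_zero.1 f1).resolve_right ht0
      have g2 : g 2 = 0 := (mul_eq_zero.1 f2).resolve_right hγ0
      fin_cases i
      exacts [hi g0, hi g1, hi g2, hi g3]
    have hK : (γ : K) ^ 2 * t ^ 2 = γ * c ^ 2 + t * d ^ 2 := by
      apply mul_left_cancel₀ g3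
      linear_combination (γ * t : K) * e3 / 2 - γ * c * f1 - t * d * f2
    exact RingOfIntegers.ext (by simpa using hK)
  have hγ' : γ ≠ 0 := by
    rintro rfl
    simp at hγ0
  have ht' : t ≠ 0 := by
    rintro rfl
    simp at ht0
  rcases hc with h | rfl | h
  · exact hno2 ⟨c, by rw [← coe_sq_int, ← h, coe_two_int]⟩
  · have h5 : d ^ 2 = γ ^ 2 * t := by
      apply mul_left_cancel₀ ht'
      linear_combination -hrel
    -- `t` is a square in `K`, hence in the integrally closed ring `𝓞 K`
    obtain ⟨e, rfl⟩ : γ ∣ d :=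
      (IsIntegrallyClosed.pow_dvd_pow_iff two_ne_zero).1 ⟨t, h5⟩
    refine (hno e).1 (mul_left_cancel₀ (pow_ne_zero 2 hγ') ?_)
    linear_combination -h5
  · refine (hno (t * d)).2 ?_
    linear_combination t * hrel + γ * t * h2 + γ * t * h
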